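/- Let f(t) = 1/(1+t²) for t ≥ 0 and ρ(x) = 1/(π(1+x²)). Then for every q > 0, (2/q) ∫₀^∞ ψ(t) ρ(q t) dt = (1 − 2q(2q² + q − 2)) / (4q(q+1)⁴). -/

import Mathlib

/-!
With `u = 1 + t²` one computes `ψ(t) = 6/u² - 9/u³ + 2/u⁴`, so the integrand is a rational function
of `t`. When `q ≠ 1`, partial fractions in `u` write `ψ(t)/(1 + q²t²)` as a combination of
`1/u, …, 1/u⁴` and `1/(1 + q²t²)`; when `q = 1` it is already a combination of `1/u³, 1/u⁴, 1/u⁵`.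
The integrals `Jₙ = ∫₀^∞ u⁻ⁿ` follow from `J₁ = π/2` and the recursion
`2n Jₙ₊₁ = (2n - 1) Jₙ`, which is the fundamental theorem of calculus for `t ↦ t/uⁿ`, and
`∫₀^∞ 1/(1 + q²t²) = π/(2q)` by scaling (`integral_partialFractions`).
-/

open MeasureTheory Set Filter

/-- Cauchy satisficing kernel `f(t) = 1/(1+t²)`. -/
noncomputable def fCauchy : ℝ → ℝ := fun t => 1 / (1 + t^2)

/-- `ψ(t) = f''(t)(1 - f(t)/2) + (f'(t))²/2` for the Cauchy kernel. -/
noncomputable def psiCauchy : ℝ → ℝ := fun t =>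
  iteratedDeriv 2 fCauchy t * (1 - (1/2) * fCauchy t) + (1/2) * (deriv fCauchy t)^2

theorem psiCauchy_eq (t : ℝ) :
    psiCauchy t = 6 / (1 + t^2)^2 - 9 / (1 + t^2)^3 + 2 / (1 + t^2)^4 := by
  have hd : deriv fCauchy = fun t : ℝ => -(2 * t) / (1 + t^2)^2 := by
    funext t
    have hu : (1 + t^2 : ℝ) ≠ 0 := by positivity
    have h := (hasDerivAt_const t (1:ℝ)).div (((hasDerivAt_id t).pow 2).const_add 1) hu
    refine HasDerivAt.deriv (f := fCauchy) (h.congr_deriv ?_)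
    simp
  have hd2 : iteratedDeriv 2 fCauchy t = (6 * t^2 - 2) / (1 + t^2)^3 := by
    have hu : (1 + t^2 : ℝ) ≠ 0 := by positivity
    rw [iteratedDeriv_succ, iteratedDeriv_one, hd]
    have h := (((hasDerivAt_id t).const_mul 2).neg).div
      ((((hasDerivAt_id t).pow 2).const_add 1).pow 2) (pow_ne_zero 2 hu)
    refine HasDerivAt.deriv (f := fun t : ℝ => -(2 * t) / (1 + t^2)^2) (h.congr_deriv ?_)
    simp
    field_simp
    ring
  have hu : (1 + t^2 : ℝ) ≠ 0 := by positivity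
  rw [psiCauchy, hd2, hd, fCauchy]
  field_simp
  ring

theorem integrable_inv_pow (n : ℕ) :
    IntegrableOn (fun t : ℝ => ((1 + t^2)^(n+1))⁻¹) (Ioi 0) := by
  refine (integrable_inv_one_add_sq.mono' ?_ ?_).integrableOn
  · apply Measurable.aestronglyMeasurable
    fun_prop
  · refine Eventually.of_forall fun t => ?_
    have h1 : (1:ℝ) ≤ 1 + t^2 := by nlinarith [sq_nonneg t]
    rw [Real.norm_of_nonneg (by positivity)]
    exact inv_anti₀ (by positivity) (le_self_pow₀ h1 (by omega))

theorem tendsto_mul_inv_pow (n : ℕ) :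
    Tendsto (fun t : ℝ => t * ((1 + t^2)^(n+1))⁻¹) atTop (nhds 0) := by
  refine squeeze_zero' ?_ ?_ tendsto_inv_atTop_zero
  · filter_upwards [eventually_gt_atTop 0] with t ht
    positivity
  · filter_upwards [eventually_gt_atTop 0] with t ht
    have h1 : (1:ℝ) ≤ 1 + t^2 := by nlinarith [sq_nonneg t]
    have h2 : 1 + t^2 ≤ (1 + t^2)^(n+1) := le_self_pow₀ h1 (by omega)
    have h3 : (0:ℝ) < (1 + t^2)^(n+1) := by positivity
    rw [← div_eq_mul_inv, div_le_iff₀ h3, inv_mul_eq_div, le_div_iff₀ ht]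
    nlinarith

/-- The recursion obtained from the vanishing of `t/(1+t²)ⁿ⁺¹` at `0` and at `∞`. -/
theorem integral_inv_pow_succ (n : ℕ) :
    ∫ t in Ioi (0:ℝ), ((1 + t^2)^(n+2))⁻¹
      = (2*(n:ℝ)+1) / (2*((n:ℝ)+1)) * ∫ t in Ioi (0:ℝ), ((1 + t^2)^(n+1))⁻¹ := by
  have hder : ∀ t ∈ Ici (0:ℝ), HasDerivAt (fun t : ℝ => t * ((1 + t^2)^(n+1))⁻¹)
      (2*(n+1) * ((1 + t^2)^(n+2))⁻¹ - (2*n+1) * ((1 + t^2)^(n+1))⁻¹) t := by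
    intro t _
    have hu : (1 + t^2 : ℝ) ≠ 0 := by positivity
    have h := (hasDerivAt_id t).mul
      (((((hasDerivAt_id t).pow 2).const_add 1).pow (n+1)).inv (pow_ne_zero (n+1) hu))
    refine h.congr_deriv ?_
    simp
    field_simp
    ring
  have hI := integral_Ioi_of_hasDerivAt_of_tendsto' hder
    (((integrable_inv_pow (n+1)).const_mul _).sub ((integrable_inv_pow n).const_mul _))
    (tendsto_mul_inv_pow n)
  rw [integral_sub ((integrable_inv_pow (n+1)).const_mul _) ((integrable_inv_pow n).const_mul _),
    integral_const_mul, integral_const_mul] at hI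
  simp only [zero_mul, sub_zero] at hI
  have hn : (n:ℝ) + 1 ≠ 0 := by positivity
  rw [div_mul_eq_mul_div, eq_div_iff (mul_ne_zero two_ne_zero hn)]
  linarith

/-- The integral over `(0, ∞)` of a partial-fraction expansion in `u = 1 + t²`, with an extra
term in `1/(1 + q²t²)`. -/
theorem integral_partialFractions {q : ℝ} (hq : 0 < q) (a₁ a₂ a₃ a₄ a₅ b : ℝ) :
    ∫ t in Ioi (0:ℝ), (a₁ * ((1 + t^2)^1)⁻¹ + a₂ * ((1 + t^2)^2)⁻¹ + a₃ * ((1 + t^2)^3)⁻¹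
        + a₄ * ((1 + t^2)^4)⁻¹ + a₅ * ((1 + t^2)^5)⁻¹ + b * (1 + (q*t)^2)⁻¹)
      = Real.pi / 2 * (a₁ + a₂/2 + 3*a₃/8 + 5*a₄/16 + 35*a₅/128 + b/q) := by
  have j1 : ∫ t in Ioi (0:ℝ), ((1 + t^2)^1)⁻¹ = Real.pi / 2 := by simp
  have j2 := integral_inv_pow_succ 0
  have j3 := integral_inv_pow_succ 1
  have j4 := integral_inv_pow_succ 2
  have j5 := integral_inv_pow_succ 3
  norm_num only [Nat.reduceAdd] at j2 j3 j4 j5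
  have jq : ∫ t in Ioi (0:ℝ), (1 + (q*t)^2)⁻¹ = q⁻¹ * (Real.pi / 2) := by
    rw [integral_comp_mul_left_Ioi (fun t : ℝ => (1 + t^2)⁻¹) 0 hq]
    simp
  have i1 := (integrable_inv_pow 0).const_mul a₁
  have i2 := (integrable_inv_pow 1).const_mul a₂
  have i3 := (integrable_inv_pow 2).const_mul a₃
  have i4 := (integrable_inv_pow 3).const_mul a₄
  have i5 := (integrable_inv_pow 4).const_mul a₅
  have iq : IntegrableOn (fun t : ℝ => b * (1 + (q*t)^2)⁻¹) (Ioi 0) :=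
    ((integrableOn_Ioi_comp_mul_left_iff (fun t : ℝ => (1 + t^2)⁻¹) 0 hq).2
      integrable_inv_one_add_sq.integrableOn).const_mul b
  norm_num only [Nat.reduceAdd] at i1 i2 i3 i4 i5
  have i12 := i1.fun_add i2
  have i13 := i12.fun_add i3
  have i14 := i13.fun_add i4
  have i15 := i14.fun_add i5
  rw [integral_add i15 iq, integral_add i14 i5, integral_add i13 i4, integral_add i12 i3,
    integral_add i1 i2]
  simp only [integral_const_mul]
  rw [jq, j5, j4, j3, j2, j1]
  ring

/-- Cauchy–Cauchy linear coefficient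
`μ(q) = (1 - 2q(2q² + q - 2)) / (4q(q+1)⁴)`. -/
theorem stmt19 :
    ∀ q : ℝ, 0 < q →
      (2/q) * ∫ t in Ioi (0:ℝ),
          psiCauchy t * (1 / (Real.pi * (1 + (q*t)^2)))
        = (1 - 2*q*(2*q^2 + q - 2)) / (4*q*(q+1)^4) := by
  intro q hq
  have hpi : Real.pi ≠ 0 := Real.pi_ne_zero
  rcases eq_or_ne q 1 with rfl | hq1
  · have key : ∀ t : ℝ, psiCauchy t * (1 / (Real.pi * (1 + (1*t)^2)))
        = Real.pi⁻¹ * (0 * ((1 + t^2)^1)⁻¹ + 0 * ((1 + t^2)^2)⁻¹ + 6 * ((1 + t^2)^3)⁻¹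
          + (-9) * ((1 + t^2)^4)⁻¹ + 2 * ((1 + t^2)^5)⁻¹ + 0 * (1 + (1*t)^2)⁻¹) := by
      intro t
      have hu : (1 + t^2 : ℝ) ≠ 0 := by positivity
      rw [psiCauchy_eq, one_mul]
      field_simp
      ring
    simp_rw [key]
    rw [integral_const_mul, integral_partialFractions one_pos]
    field_simp
    norm_num
  · have hm : 1 - q ≠ 0 := sub_ne_zero.2 hq1.symm
    have hp : 1 + q ≠ 0 := by positivity
    obtain ⟨d, hd⟩ : ∃ d, d = 1 - q^2 := ⟨_, rfl⟩
    have hd0 : d ≠ 0 := by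
      rw [hd, show 1 - q^2 = (1 - q) * (1 + q) by ring]
      exact mul_ne_zero hm hp
    -- Since `1 + q²t² = d + q²u`, the coefficients of `u⁻⁴, …, u⁻¹` are the first Taylor
    -- coefficients at `u = 0` of `(2 - 9u + 6u²)/(d + q²u)`.
    obtain ⟨a₄, h4⟩ : ∃ a, a = 2 / d := ⟨_, rfl⟩
    obtain ⟨a₃, h3⟩ : ∃ a, a = (-9 - q^2 * a₄) / d := ⟨_, rfl⟩
    obtain ⟨a₂, h2⟩ : ∃ a, a = (6 - q^2 * a₃) / d := ⟨_, rfl⟩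
    obtain ⟨a₁, h1⟩ : ∃ a, a = -(q^2 * a₂) / d := ⟨_, rfl⟩
    have key : ∀ t : ℝ, psiCauchy t * (1 / (Real.pi * (1 + (q*t)^2)))
        = Real.pi⁻¹ * (a₁ * ((1 + t^2)^1)⁻¹ + a₂ * ((1 + t^2)^2)⁻¹ + a₃ * ((1 + t^2)^3)⁻¹
          + a₄ * ((1 + t^2)^4)⁻¹ + 0 * ((1 + t^2)^5)⁻¹ + (-(q^2 * a₁)) * (1 + (q*t)^2)⁻¹) := by
      intro t
      have hu : (1 + t^2 : ℝ) ≠ 0 := by positivity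
      have hv : (1 + (q*t)^2 : ℝ) ≠ 0 := by positivity
      have e4 : a₄ * d = 2 := by rw [h4]; field_simp
      have e3 : a₃ * d = -9 - q^2 * a₄ := by rw [h3]; field_simp
      have e2 : a₂ * d = 6 - q^2 * a₃ := by rw [h2]; field_simp
      have e1 : a₁ * d = -(q^2 * a₂) := by rw [h1]; field_simp
      have hvu : 1 + (q*t)^2 = d + q^2 * (1 + t^2) := by rw [hd]; ring
      rw [psiCauchy_eq]
      generalize 1 + t^2 = u at hu hvu ⊢
      generalize 1 + (q*t)^2 = v at hv hvu ⊢
      rw [show d = v - q^2 * u by rw [hvu]; ring] at e4 e3 e2 e1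
      field_simp
      linear_combination (-u) * e4 - u^2 * e3 - u^3 * e2 - u^4 * e1
    simp_rw [key]
    rw [integral_const_mul, integral_partialFractions hq]
    have hd' : d = (1 - q) * (1 + q) := by rw [hd]; ring
    rw [h1, h2, h3, h4, hd', add_comm q 1]
    field_simp
    ring
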